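/- Let R be a commutative Noetherian local ring and let M be a nonzero finitely generated R-module with finite injective dimension. Then the projective dimension of M equals the Gorenstein dimension of M (as elements of ℕ ∪ {∞}); in particular, pd_R(M) is finite if and only if Gdim_R(M) is finite. -/

import Mathlib

open CategoryTheory Pointwise

universe u

variable (R : Type u) [CommRing R]

/-- `Ext^n_R(X, Y) = 0`. -/
def ExtVanish (X Y : Type u) [AddCommGroup X] [Module R X]
    [AddCommGroup Y] [Module R Y] (n : ℕ) : Prop :=
  Subsingleton (((Ext R (ModuleCat.{u} R) n).obj
    (Opposite.op (ModuleCat.of R X))).obj (ModuleCat.of R Y))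

/-- A finitely generated module `X` is totally reflexive if the evaluation map to the
double dual is bijective and `Ext^i(X, R) = 0 = Ext^i(X^*, R)` for all `i ≥ 1`. -/
def IsTotallyReflexive (X : Type u) [AddCommGroup X] [Module R X] : Prop :=
  Module.Finite R X ∧
  Function.Bijective (Module.Dual.eval R X) ∧
  (∀ i : ℕ, 1 ≤ i → ExtVanish R X R i) ∧
  (∀ i : ℕ, 1 ≤ i → ExtVanish R (Module.Dual R X) R i)

/-- `0 → A → B → C → 0` is a short exact sequence. -/
def IsShortExact {A B C : Type u} [AddCommGroup A] [Module R A] [AddCommGroup B] [Module R B]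
    [AddCommGroup C] [Module R C] (f : A →ₗ[R] B) (g : B →ₗ[R] C) : Prop :=
  Function.Injective f ∧ Function.Surjective g ∧ Function.Exact f g

/-- Gorenstein dimension at most `n`: there is a resolution of length `≤ n`
by totally reflexive modules. -/
def GdimLE : ℕ → ModuleCat.{u} R → Prop
  | 0, M => IsTotallyReflexive R M
  | n + 1, M => ∃ (X K : ModuleCat.{u} R) (f : K →ₗ[R] X) (g : X →ₗ[R] M),
      IsTotallyReflexive R X ∧ IsShortExact R f g ∧ GdimLE n K

/-- Projective dimension at most `n`. -/
def PdimLE : ℕ → ModuleCat.{u} R → Prop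
  | 0, M => Module.Finite R M ∧ Module.Projective R M
  | n + 1, M => ∃ (X K : ModuleCat.{u} R) (f : K →ₗ[R] X) (g : X →ₗ[R] M),
      Module.Finite R X ∧ Module.Projective R X ∧ IsShortExact R f g ∧ PdimLE n K

/-- Injective dimension at most `n`. -/
def InjdimLE : ℕ → ModuleCat.{u} R → Prop
  | 0, M => Module.Injective R M
  | n + 1, M => ∃ (I C : ModuleCat.{u} R) (f : M →ₗ[R] I) (g : I →ₗ[R] C),
      Module.Injective R I ∧ IsShortExact R f g ∧ InjdimLE n C

/-- The Gorenstein dimension, as an element of `ℕ∞`. -/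
noncomputable def Gdim (M : ModuleCat.{u} R) : ℕ∞ :=
  sInf {n : ℕ∞ | ∃ m : ℕ, n = (m : ℕ∞) ∧ GdimLE R m M}

/-- The projective dimension, as an element of `ℕ∞`. -/
noncomputable def Pdim (M : ModuleCat.{u} R) : ℕ∞ :=
  sInf {n : ℕ∞ | ∃ m : ℕ, n = (m : ℕ∞) ∧ PdimLE R m M}

/-- A local ring is Gorenstein if it has finite injective dimension over itself. -/
def IsGorensteinRing : Prop :=
  ∃ n : ℕ, InjdimLE R n (ModuleCat.of R R)

/-- `IsSyzygy R n S K` : `S` is an `n`-th syzygy of `K`, i.e. there is an exact sequence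
`0 → S → F_{n-1} → ⋯ → F_0 → K → 0` with each `F_j` finitely generated free. -/
def IsSyzygy : ℕ → ModuleCat.{u} R → ModuleCat.{u} R → Prop
  | 0, S, K => Nonempty (S ≃ₗ[R] K)
  | n + 1, S, K => ∃ (W F : ModuleCat.{u} R) (f : W →ₗ[R] F) (g : F →ₗ[R] K),
      Module.Free R F ∧ Module.Finite R F ∧ IsShortExact R f g ∧ IsSyzygy n S W

/-- One step in a reducing sequence: a short exact sequence
`0 → K^{⊕a} → L → (Ω^n K)^{⊕b} → 0`. -/
def ReducingStep (K L : ModuleCat.{u} R) (a b n : ℕ) : Prop :=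
  ∃ (W : ModuleCat.{u} R) (f : (Fin a → K) →ₗ[R] L) (g : L →ₗ[R] (Fin b → W)),
    IsSyzygy R n W K ∧ IsShortExact R f g

/-- `M` admits a reducing sequence `K_0 = M, K_1, …, K_r` relative to the property `P`,
that is, short exact sequences `0 → K_{i-1}^{⊕a_i} → K_i → (Ω^{n_i}K_{i-1})^{⊕b_i} → 0`
with `a_i, b_i, n_i ≥ 1` and `P (K_r)`. -/
def HasReducingSeq (P : ModuleCat.{u} R → Prop) (M : ModuleCat.{u} R) (r : ℕ) : Prop :=
  ∃ (K : Fin (r + 1) → ModuleCat.{u} R) (a b n : Fin r → ℕ),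
    K 0 = M ∧ (∀ i, Module.Finite R (K i)) ∧
    (∀ i : Fin r, 1 ≤ a i ∧ 1 ≤ b i ∧ 1 ≤ n i ∧
      ReducingStep R (K i.castSucc) (K i.succ) (a i) (b i) (n i)) ∧
    P (K (Fin.last r))

/-- The reducing invariant attached to the finiteness property `P`. -/
noncomputable def ReducingDim (P : ModuleCat.{u} R → Prop) (M : ModuleCat.{u} R) : ℕ∞ :=
  sInf {n : ℕ∞ | ∃ r : ℕ, n = (r : ℕ∞) ∧ HasReducingSeq R P M r}

/-- The reducing Gorenstein dimension. -/
noncomputable def rGdim (M : ModuleCat.{u} R) : ℕ∞ :=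
  ReducingDim R (fun N => ∃ m : ℕ, GdimLE R m N) M

/-- The reducing projective dimension. -/
noncomputable def rPdim (M : ModuleCat.{u} R) : ℕ∞ :=
  ReducingDim R (fun N => ∃ m : ℕ, PdimLE R m N) M

/-- depth of a module over a local ring: `inf { i | Ext^i(k, M) ≠ 0 }`. -/
noncomputable def depth [IsLocalRing R] (M : ModuleCat.{u} R) : ℕ∞ :=
  sInf {n : ℕ∞ | ∃ i : ℕ, n = (i : ℕ∞) ∧
    ¬ ExtVanish R (R ⧸ IsLocalRing.maximalIdeal R) M i}

/-- maximal Cohen-Macaulay: depth equals the Krull dimension of the ring. -/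
def IsMCM [IsLocalRing R] (M : ModuleCat.{u} R) : Prop :=
  (depth R M : WithBot ℕ∞) = ringKrullDim R

/-- torsion-free: every non zero-divisor of `R` is a non zero-divisor on `M`. -/
def IsTorsionFreeModule (M : Type u) [AddCommGroup M] [Module R M] : Prop :=
  ∀ r ∈ nonZeroDivisors R, ∀ m : M, r • m = 0 → m = 0

/- A module of finite injective dimension is `Ext`-orthogonal to every totally reflexive module `A`:
embedding `A` in a projective with totally reflexive cokernel `A'` shifts `Ext^i(A, -)` to
`Ext^(i+1)(A', -)`, and iterating reaches degrees where `Ext` vanishes. Finite free modules are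
orthogonal for the trivial reason that `Ext^i(A, R) = 0`, and orthogonality passes to kernels of
surjections. If `M` is orthogonal with a totally reflexive resolution of length `n + 1`, then
covering its first term by a finite free module gives a surjection onto `M` whose kernel is
orthogonal with a totally reflexive resolution of length `n`. By induction it remains to treat an
orthogonal `M` that is itself totally reflexive: its embedding in a projective splits. -/

section

variable {R}
variable {A B C X Y : Type u} [AddCommGroup A] [Module R A] [AddCommGroup B] [Module R B]
  [AddCommGroup C] [Module R C] [AddCommGroup X] [Module R X] [AddCommGroup Y] [Module R Y]

theorem extVanish_iff_subsingleton {n : ℕ} (hn : 1 ≤ n) :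
    ExtVanish R X Y n ↔
      Subsingleton (Abelian.Ext (ModuleCat.of R X) (ModuleCat.of R Y) n) := by
  obtain ⟨p, rfl⟩ := Nat.exists_eq_add_of_le' hn
  let P := ProjectiveResolution.of (ModuleCat.of R X)
  have cocycles_are_coboundaries : ExtVanish R X Y (p + 1) ↔
      ∀ f : P.complex.X (p + 1) ⟶ ModuleCat.of R Y, P.complex.d (p + 2) (p + 1) ≫ f = 0 →
        ∃ g : P.complex.X p ⟶ ModuleCat.of R Y, P.complex.d (p + 1) p ≫ g = f := by
    rw [ExtVanish, ← ModuleCat.isZero_iff_subsingleton,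
      (P.isoExt (p + 1) (ModuleCat.of R Y)).isZero_iff,
      ← HomologicalComplex.exactAt_iff_isZero_homology,
      HomologicalComplex.exactAt_iff' _ p (p + 1) (p + 2) (by simp) (by simp),
      ShortComplex.moduleCat_exact_iff]
    rfl
  rw [cocycles_are_coboundaries]
  refine ⟨fun h => subsingleton_of_forall_eq 0 fun x => ?_, fun h f hf => ?_⟩
  · obtain ⟨f, hf, rfl⟩ := P.extMk_surjective x (p + 2) rfl
    exact (P.extMk_eq_zero_iff f (p + 2) rfl hf p rfl).2 (h f hf)
  · exact (P.extMk_eq_zero_iff f (p + 2) rfl hf p rfl).1 (Subsingleton.elim _ _)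

namespace ExtVanish

theorem congr_left (e : A ≃ₗ[R] B) {n : ℕ} (h : ExtVanish R A Y n) : ExtVanish R B Y n :=
  (((Ext R (ModuleCat.{u} R) n).mapIso e.toModuleIso.op).app
    (ModuleCat.of R Y)).toLinearEquiv.toEquiv.subsingleton_congr.2 h

theorem of_projective [Module.Projective R X] {n : ℕ} (hn : 1 ≤ n) : ExtVanish R X Y n := by
  rw [extVanish_iff_subsingleton hn]
  obtain ⟨p, rfl⟩ := Nat.exists_eq_add_of_le' hn
  exact Abelian.Ext.subsingleton_of_projective _ _ p

theorem pi {ι : Type} [Finite ι] {Z : ι → Type u} [∀ j, AddCommGroup (Z j)]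
    [∀ j, Module R (Z j)] {n : ℕ} (hn : 1 ≤ n) (h : ∀ j, ExtVanish R X (Z j) n) :
    ExtVanish R X (∀ j, Z j) n := by
  classical
  have := Fintype.ofFinite ι
  rw [extVanish_iff_subsingleton hn]
  refine subsingleton_of_forall_eq 0 fun x => ?_
  let π (j : ι) : ModuleCat.of R (∀ j, Z j) ⟶ ModuleCat.of R (Z j) :=
    ModuleCat.ofHom (LinearMap.proj j)
  let σ (j : ι) : ModuleCat.of R (Z j) ⟶ ModuleCat.of R (∀ j, Z j) :=
    ModuleCat.ofHom (LinearMap.single R Z j)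
  have id_eq_sum : 𝟙 (ModuleCat.of R (∀ j, Z j)) = ∑ j, π j ≫ σ j := by
    ext x
    simp [π, σ]
  have comp_π (j : ι) : x.comp (Abelian.Ext.mk₀ (π j)) (add_zero n) = 0 :=
    ((extVanish_iff_subsingleton hn).1 (h j)).elim _ _
  rw [← x.comp_mk₀_id, id_eq_sum, Abelian.Ext.mk₀_sum, Abelian.Ext.comp_sum]
  refine Finset.sum_eq_zero fun j _ => ?_
  rw [← Abelian.Ext.mk₀_comp_mk₀, ← Abelian.Ext.comp_assoc_of_third_deg_zero, comp_π,
    Abelian.Ext.zero_comp]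

end ExtVanish

theorem isShortExact_ker_subtype {g : B →ₗ[R] C} (hg : Function.Surjective g) :
    IsShortExact R (LinearMap.ker g).subtype g :=
  ⟨Submodule.injective_subtype _, hg, g.exact_subtype_ker_map⟩

namespace IsShortExact

variable {f : A →ₗ[R] B} {g : B →ₗ[R] C}

theorem injective (h : IsShortExact R f g) : Function.Injective f :=
  h.1

theorem surjective (h : IsShortExact R f g) : Function.Surjective g :=
  h.2.1

theorem exact (h : IsShortExact R f g) : Function.Exact f g :=
  h.2.2

theorem comp_equiv (h : IsShortExact R f g) (e : X ≃ₗ[R] A) :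
    IsShortExact R (f ∘ₗ e.toLinearMap) g :=
  ⟨h.injective.comp e.injective, h.surjective, LinearMap.exact_iff.2 <| by
    rw [LinearEquiv.range_comp, h.exact.linearMap_ker_eq]⟩

/-- The short complex in `ModuleCat R` underlying a short exact sequence of modules, through which
the long exact sequences of `Abelian.Ext` become available. -/
abbrev shortComplex (h : IsShortExact R f g) : ShortComplex (ModuleCat.{u} R) :=
  ShortComplex.mk (ModuleCat.ofHom f) (ModuleCat.ofHom g)
    (ModuleCat.hom_ext h.exact.linearMap_comp_eq_zero)

theorem shortExact (h : IsShortExact R f g) : h.shortComplex.ShortExact :=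
  ModuleCat.shortComplex_shortExact _ h.exact h.injective h.surjective

theorem extVanish_mid (h : IsShortExact R f g) {n : ℕ} (hn : 1 ≤ n)
    (hA : ExtVanish R A Y n) (hC : ExtVanish R C Y n) : ExtVanish R B Y n := by
  rw [extVanish_iff_subsingleton hn] at *
  refine subsingleton_of_forall_eq 0 fun x => ?_
  obtain ⟨y, rfl⟩ := Abelian.Ext.contravariant_sequence_exact₂ h.shortExact _ x (hA.elim _ _)
  obtain rfl : y = 0 := hC.elim _ _
  exact Abelian.Ext.comp_zero ..

theorem extVanish_left (h : IsShortExact R f g) {n : ℕ} (hn : 1 ≤ n)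
    (hB : ExtVanish R B Y n) (hC : ExtVanish R C Y (n + 1)) : ExtVanish R A Y n := by
  rw [extVanish_iff_subsingleton (by lia)] at *
  refine subsingleton_of_forall_eq 0 fun x => ?_
  obtain ⟨y, rfl⟩ := Abelian.Ext.contravariant_sequence_exact₁ h.shortExact _ x
    (add_comm 1 n) (hC.elim _ _)
  obtain rfl : y = 0 := hB.elim _ _
  exact Abelian.Ext.comp_zero ..

theorem extVanish_right (h : IsShortExact R f g) {n : ℕ} (hn : 1 ≤ n)
    (hA : ExtVanish R A Y n) (hB : ExtVanish R B Y (n + 1)) : ExtVanish R C Y (n + 1) := by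
  rw [extVanish_iff_subsingleton (by lia)] at *
  refine subsingleton_of_forall_eq 0 fun x => ?_
  obtain ⟨y, rfl⟩ := Abelian.Ext.contravariant_sequence_exact₃ h.shortExact _ x (hB.elim _ _)
    (add_comm 1 n)
  obtain rfl : y = 0 := hA.elim _ _
  exact Abelian.Ext.comp_zero ..

theorem extVanish_kernel (h : IsShortExact R f g) {n : ℕ} (hn : 1 ≤ n)
    (hC : ExtVanish R X C n) (hB : ExtVanish R X B (n + 1)) : ExtVanish R X A (n + 1) := by
  rw [extVanish_iff_subsingleton (by lia)] at *
  refine subsingleton_of_forall_eq 0 fun x => ?_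
  obtain ⟨y, rfl⟩ := Abelian.Ext.covariant_sequence_exact₁ _ h.shortExact x (hB.elim _ _) rfl
  obtain rfl : y = 0 := hC.elim _ _
  exact Abelian.Ext.zero_comp ..

theorem exists_extension (h : IsShortExact R f g) (hC : ExtVanish R C Y 1) (φ : A →ₗ[R] Y) :
    ∃ ψ : B →ₗ[R] Y, ψ ∘ₗ f = φ := by
  rw [extVanish_iff_subsingleton le_rfl] at hC
  obtain ⟨y, hy⟩ := Abelian.Ext.contravariant_sequence_exact₁ h.shortExact (ModuleCat.of R Y)
    (Abelian.Ext.mk₀ (ModuleCat.ofHom φ)) (add_zero 1) (hC.elim _ _)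
  obtain ⟨ψ, rfl⟩ := (Abelian.Ext.mk₀_bijective _ _).2 y
  rw [Abelian.Ext.mk₀_comp_mk₀] at hy
  exact ⟨ψ.hom, congrArg ModuleCat.Hom.hom ((Abelian.Ext.mk₀_bijective _ _).1 hy)⟩

theorem extVanish_one_right (h : IsShortExact R f g) (hB : ExtVanish R B Y 1)
    (hext : ∀ φ : A →ₗ[R] Y, ∃ ψ : B →ₗ[R] Y, ψ ∘ₗ f = φ) : ExtVanish R C Y 1 := by
  rw [extVanish_iff_subsingleton le_rfl] at *
  refine subsingleton_of_forall_eq 0 fun x => ?_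
  obtain ⟨y, rfl⟩ := Abelian.Ext.contravariant_sequence_exact₃ h.shortExact _ x (hB.elim _ _)
    (add_zero 1)
  obtain ⟨φ, rfl⟩ := (Abelian.Ext.mk₀_bijective _ _).2 y
  obtain ⟨ψ, hψ⟩ := hext φ.hom
  obtain rfl : ModuleCat.ofHom f ≫ ModuleCat.ofHom ψ = φ := ModuleCat.hom_ext hψ
  rw [← Abelian.Ext.mk₀_comp_mk₀]
  exact h.shortExact.extClass_comp_assoc _

theorem dual (h : IsShortExact R f g) (hC : ExtVanish R C R 1) :
    IsShortExact R g.dualMap f.dualMap :=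
  ⟨LinearMap.dualMap_injective_of_surjective h.surjective, h.exists_extension hC,
    LinearMap.exact_lcomp_of_exact_of_surjective R h.exact h.surjective⟩

theorem bijective_dual_eval_mid (h : IsShortExact R f g) (hC : ExtVanish R C R 1)
    (hA' : ExtVanish R (Module.Dual R A) R 1) (hA : Function.Bijective (Module.Dual.eval R A))
    (hC' : Function.Bijective (Module.Dual.eval R C)) :
    Function.Bijective (Module.Dual.eval R B) := by
  have hdd := (h.dual hC).dual hA'
  exact LinearMap.bijective_of_surjective_of_bijective_of_bijective_of_injective
    (0 : Unit →ₗ[R] A) f g (0 : C →ₗ[R] Unit) 0 f.dualMap.dualMap g.dualMap.dualMap 0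
    .id (Module.Dual.eval R A) (Module.Dual.eval R B) (Module.Dual.eval R C) .id
    (LinearMap.ext fun _ => (map_zero _).symm) rfl rfl rfl
    ((LinearMap.exact_zero_iff_injective _ f).2 h.injective) h.exact
    ((LinearMap.exact_zero_iff_surjective _ g).2 h.surjective)
    ((LinearMap.exact_zero_iff_injective _ _).2 hdd.injective) hdd.exact
    ((LinearMap.exact_zero_iff_surjective _ _).2 hdd.surjective)
    Function.surjective_id hA hC' Function.injective_id

theorem bijective_dual_eval_left (h : IsShortExact R f g) (hC : ExtVanish R C R 1)
    (hB : Function.Bijective (Module.Dual.eval R B))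
    (hC' : Function.Injective (Module.Dual.eval R C)) :
    Function.Bijective (Module.Dual.eval R A) := by
  have hd := h.dual hC
  exact LinearMap.bijective_of_bijective_of_injective_of_left_exact f g
    f.dualMap.dualMap g.dualMap.dualMap _ _ _ rfl rfl h.exact
    (LinearMap.exact_lcomp_of_exact_of_surjective R hd.exact hd.surjective) hB hC' h.injective
    (LinearMap.dualMap_injective_of_surjective hd.surjective)

end IsShortExact

namespace IsTotallyReflexive

theorem finite (h : IsTotallyReflexive R X) : Module.Finite R X :=
  h.1

theorem bijective_dual_eval (h : IsTotallyReflexive R X) :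
    Function.Bijective (Module.Dual.eval R X) :=
  h.2.1

theorem extVanish (h : IsTotallyReflexive R X) {i : ℕ} (hi : 1 ≤ i) : ExtVanish R X R i :=
  h.2.2.1 i hi

theorem extVanish_dual (h : IsTotallyReflexive R X) {i : ℕ} (hi : 1 ≤ i) :
    ExtVanish R (Module.Dual R X) R i :=
  h.2.2.2 i hi

theorem of_projective [Module.Finite R X] [Module.Projective R X] : IsTotallyReflexive R X :=
  ⟨inferInstance, Module.bijective_dual_eval R X, fun _ hi => .of_projective hi,
    fun _ hi => .of_projective hi⟩

theorem dual [IsNoetherianRing R] (h : IsTotallyReflexive R X) :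
    IsTotallyReflexive R (Module.Dual R X) := by
  have := h.finite
  have : Module.IsReflexive R X := ⟨h.bijective_dual_eval⟩
  exact ⟨inferInstance, Module.bijective_dual_eval R _, fun _ hi => h.extVanish_dual hi,
    fun _ hi => (h.extVanish hi).congr_left (Module.evalEquiv R X)⟩

end IsTotallyReflexive

namespace IsShortExact

variable {f : A →ₗ[R] B} {g : B →ₗ[R] C}

theorem isTotallyReflexive_mid (h : IsShortExact R f g) (hA : IsTotallyReflexive R A)
    (hC : IsTotallyReflexive R C) : IsTotallyReflexive R B := by
  have := hA.finite
  have := hC.finite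
  have hd := h.dual (hC.extVanish le_rfl)
  exact ⟨.of_exact h.exact h.surjective,
    h.bijective_dual_eval_mid (hC.extVanish le_rfl) (hA.extVanish_dual le_rfl)
      hA.bijective_dual_eval hC.bijective_dual_eval,
    fun _ hi => h.extVanish_mid hi (hA.extVanish hi) (hC.extVanish hi),
    fun _ hi => hd.extVanish_mid hi (hC.extVanish_dual hi) (hA.extVanish_dual hi)⟩

theorem extVanish_one_dual_left (h : IsShortExact R f g) (hC : IsTotallyReflexive R C)
    (hB : ExtVanish R (Module.Dual R B) R 1) : ExtVanish R (Module.Dual R A) R 1 := by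
  refine (h.dual (hC.extVanish le_rfl)).extVanish_one_right hB fun φ => ?_
  obtain ⟨c, rfl⟩ := hC.bijective_dual_eval.surjective φ
  obtain ⟨b, rfl⟩ := h.surjective c
  exact ⟨Module.Dual.eval R B b, rfl⟩

theorem isTotallyReflexive_left [IsNoetherianRing R] (h : IsShortExact R f g)
    (hB : IsTotallyReflexive R B) (hC : IsTotallyReflexive R C) : IsTotallyReflexive R A := by
  have := hB.finite
  have hd := h.dual (hC.extVanish le_rfl)
  refine ⟨.of_injective f h.injective,
    h.bijective_dual_eval_left (hC.extVanish le_rfl) hB.bijective_dual_eval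
      hC.bijective_dual_eval.injective,
    fun i hi => h.extVanish_left hi (hB.extVanish hi) (hC.extVanish (by lia)), fun i hi => ?_⟩
  obtain rfl | hi' := hi.eq_or_lt
  · exact h.extVanish_one_dual_left hC (hB.extVanish_dual le_rfl)
  · obtain ⟨j, rfl⟩ := Nat.exists_eq_add_of_le' hi
    exact hd.extVanish_right (by lia) (hC.extVanish_dual (by lia)) (hB.extVanish_dual hi)

end IsShortExact

theorem IsTotallyReflexive.exists_isShortExact_projective [IsNoetherianRing R]
    (h : IsTotallyReflexive R X) :
    ∃ (F D : ModuleCat.{u} R) (f : X →ₗ[R] F) (g : F →ₗ[R] D),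
      Module.Projective R F ∧ IsTotallyReflexive R D ∧ IsShortExact R f g := by
  have := h.dual.finite
  have : Module.IsReflexive R X := ⟨h.bijective_dual_eval⟩
  obtain ⟨n, p, hp⟩ := Module.Finite.exists_fin' R (Module.Dual R X)
  have hs := isShortExact_ker_subtype hp
  have hker : IsTotallyReflexive R (LinearMap.ker p) :=
    hs.isTotallyReflexive_left .of_projective h.dual
  exact ⟨.of R (Module.Dual R (Fin n → R)), .of R (Module.Dual R (LinearMap.ker p)), _, _,
    inferInstanceAs (Module.Projective R (Module.Dual R (Fin n → R))), hker.dual,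
    (hs.dual (h.dual.extVanish le_rfl)).comp_equiv (Module.evalEquiv R X)⟩

/-- `Y` is in the right `Ext`-orthogonal class of the totally reflexive modules: `Ext^i(A, Y) = 0`
for all `i ≥ 1` and all totally reflexive `A`. Unlike finite injective dimension, which implies it,
this also holds for finite free modules, so it can be carried through an induction on syzygies. -/
def IsTotallyReflexiveOrthogonal (R : Type u) [CommRing R] (Y : Type u) [AddCommGroup Y]
    [Module R Y] : Prop :=
  ∀ (A : Type u) [AddCommGroup A] [Module R A], IsTotallyReflexive R A →
    ∀ i : ℕ, 1 ≤ i → ExtVanish R A Y i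

namespace IsTotallyReflexiveOrthogonal

theorem of_forall_lt [IsNoetherianRing R] {N : ℕ}
    (h : ∀ (A : Type u) [AddCommGroup A] [Module R A], IsTotallyReflexive R A →
      ∀ i : ℕ, N < i → ExtVanish R A Y i) : IsTotallyReflexiveOrthogonal R Y := by
  suffices ∀ (d : ℕ) (A : Type u) [AddCommGroup A] [Module R A], IsTotallyReflexive R A →
      ∀ i : ℕ, 1 ≤ i → N < i + d → ExtVanish R A Y i from
    fun A _ _ hA i hi => this N A hA i hi (by lia)
  intro d
  induction d with
  | zero => exact fun A _ _ hA i _ hNi => h A hA i hNi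
  | succ d ih =>
    intro A _ _ hA i hi hNi
    obtain ⟨F, D, f, g, hF, hD, hs⟩ := hA.exists_isShortExact_projective
    exact hs.extVanish_left hi (.of_projective hi) (ih D hD (i + 1) (by lia) (by lia))

theorem fin_free (n : ℕ) : IsTotallyReflexiveOrthogonal R (Fin n → R) :=
  fun _ _ _ hA _ hi => .pi hi fun _ => hA.extVanish hi

theorem projective [IsNoetherianRing R] (hX : IsTotallyReflexiveOrthogonal R X)
    (h : IsTotallyReflexive R X) : Module.Projective R X := by
  obtain ⟨F, D, f, g, hF, hD, hs⟩ := h.exists_isShortExact_projective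
  obtain ⟨r, hr⟩ := hs.exists_extension (hX D hD 1 le_rfl) LinearMap.id
  exact .of_split f r hr

end IsTotallyReflexiveOrthogonal

theorem IsShortExact.isTotallyReflexiveOrthogonal_left [IsNoetherianRing R] {f : A →ₗ[R] B}
    {g : B →ₗ[R] C} (h : IsShortExact R f g) (hB : IsTotallyReflexiveOrthogonal R B)
    (hC : IsTotallyReflexiveOrthogonal R C) : IsTotallyReflexiveOrthogonal R A := by
  refine .of_forall_lt (N := 1) fun Z _ _ hZ i hi => ?_
  obtain ⟨j, rfl⟩ := Nat.exists_eq_add_of_le' hi.le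
  exact h.extVanish_kernel (by lia) (hC Z hZ j (by lia)) (hB Z hZ (j + 1) (by lia))

namespace InjdimLE

theorem hasInjectiveDimensionLT {n : ℕ} {M : ModuleCat.{u} R} (h : InjdimLE R n M) :
    HasInjectiveDimensionLT M (n + 1) := by
  induction n generalizing M with
  | zero =>
    have : Module.Injective R M := h
    rw [Nat.zero_add, ← injective_iff_hasInjectiveDimensionLT_one]
    exact Module.injective_object_of_injective_module R M
  | succ n ih =>
    obtain ⟨I, K, f, g, hI, hs, hK⟩ := h
    have : Injective I := Module.injective_object_of_injective_module R I
    exact (hs.shortExact.hasInjectiveDimensionLT_X₃_iff n this).1 (ih hK)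

theorem isTotallyReflexiveOrthogonal [IsNoetherianRing R] {n : ℕ} {M : ModuleCat.{u} R}
    (h : InjdimLE R n M) : IsTotallyReflexiveOrthogonal R M := by
  have := h.hasInjectiveDimensionLT
  refine .of_forall_lt (N := n) fun A _ _ _ i hi => ?_
  rw [extVanish_iff_subsingleton (by lia)]
  exact HasInjectiveDimensionLT.subsingleton M (n + 1) i hi (ModuleCat.of R A)

end InjdimLE

/-- The fibre product `B ×_C X` of two linear maps into `C`, as a submodule of `B × X`,
used to pull short exact sequences back along a linear map. -/
def fiberProduct (g : B →ₗ[R] C) (q : X →ₗ[R] C) : Submodule R (B × X) :=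
  LinearMap.eqLocus (g ∘ₗ LinearMap.fst R B X) (q ∘ₗ LinearMap.snd R B X)

namespace fiberProduct

theorem mem_iff {g : B →ₗ[R] C} {q : X →ₗ[R] C} {z : B × X} :
    z ∈ fiberProduct g q ↔ g z.1 = q z.2 :=
  Iff.rfl

theorem exists_isShortExact_snd {f : A →ₗ[R] B} {g : B →ₗ[R] C} (h : IsShortExact R f g)
    (q : X →ₗ[R] C) :
    ∃ i : A →ₗ[R] fiberProduct g q,
      IsShortExact R i (LinearMap.snd R B X ∘ₗ (fiberProduct g q).subtype) := by
  have mem (a : A) : (LinearMap.inl R B X ∘ₗ f) a ∈ fiberProduct g q := by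
    simp [mem_iff, h.exact.apply_apply_eq_zero]
  refine ⟨(LinearMap.inl R B X ∘ₗ f).codRestrict _ mem, fun a a' haa' => ?_, fun x => ?_, ?_⟩
  · exact h.injective (congrArg (·.1.1) haa')
  · obtain ⟨b, hb⟩ := h.surjective (q x)
    exact ⟨⟨(b, x), hb⟩, rfl⟩
  · rintro ⟨⟨b, x⟩, hbx⟩
    refine ⟨fun hx => ?_, ?_⟩
    · obtain rfl : x = 0 := hx
      obtain ⟨a, rfl⟩ := (h.exact b).1 (hbx.trans (map_zero q))
      exact ⟨a, rfl⟩
    · rintro ⟨a, ha⟩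
      exact (congrArg (·.1.2) ha).symm

theorem exists_isShortExact_fst {f : A →ₗ[R] X} {q : X →ₗ[R] C} (g : B →ₗ[R] C)
    (h : IsShortExact R f q) :
    ∃ i : A →ₗ[R] fiberProduct g q,
      IsShortExact R i (LinearMap.fst R B X ∘ₗ (fiberProduct g q).subtype) := by
  have mem (a : A) : (LinearMap.inr R B X ∘ₗ f) a ∈ fiberProduct g q := by
    simp [mem_iff, h.exact.apply_apply_eq_zero]
  refine ⟨(LinearMap.inr R B X ∘ₗ f).codRestrict _ mem, fun a a' haa' => ?_, fun b => ?_, ?_⟩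
  · exact h.injective (congrArg (·.1.2) haa')
  · obtain ⟨x, hx⟩ := h.surjective (g b)
    exact ⟨⟨(b, x), hx.symm⟩, rfl⟩
  · rintro ⟨⟨b, x⟩, hbx⟩
    refine ⟨fun hb => ?_, ?_⟩
    · obtain rfl : b = 0 := hb
      obtain ⟨a, rfl⟩ := (h.exact x).1 (hbx.symm.trans (map_zero g))
      exact ⟨a, rfl⟩
    · rintro ⟨a, ha⟩
      exact (congrArg (·.1.1) ha).symm

theorem isShortExact_fst_comp {f : A →ₗ[R] B} {g : B →ₗ[R] C} {p : X →ₗ[R] B}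
    (hp : Function.Surjective p) (h : IsShortExact R f g) :
    IsShortExact R (LinearMap.fst R X A ∘ₗ (fiberProduct p f).subtype) (g ∘ₗ p) := by
  refine ⟨?_, h.surjective.comp hp, fun x => ⟨fun hx => ?_, ?_⟩⟩
  · rintro ⟨⟨x, a⟩, hxa⟩ ⟨⟨x', a'⟩, hxa'⟩ hxx'
    obtain rfl : x = x' := hxx'
    obtain rfl : a = a' := h.injective (hxa.symm.trans hxa')
    rfl
  · obtain ⟨a, ha⟩ := (h.exact (p x)).1 hx
    exact ⟨⟨(x, a), ha.symm⟩, rfl⟩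
  · rintro ⟨⟨⟨x, a⟩, hxa⟩, rfl⟩
    exact (congrArg g hxa).trans (h.exact.apply_apply_eq_zero a)

end fiberProduct

namespace GdimLE

variable {n : ℕ}

theorem of_isShortExact {T K L : ModuleCat.{u} R} {f : T →ₗ[R] K} {g : K →ₗ[R] L}
    (h : IsShortExact R f g) (hT : IsTotallyReflexive R T) (hL : GdimLE R n L) :
    GdimLE R n K := by
  cases n with
  | zero => exact h.isTotallyReflexive_mid hT hL
  | succ n =>
    obtain ⟨X, N, i, q, hX, hs, hN⟩ := hL
    obtain ⟨j, hj⟩ := fiberProduct.exists_isShortExact_snd h q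
    obtain ⟨k, hk⟩ := fiberProduct.exists_isShortExact_fst g hs
    exact ⟨.of R (fiberProduct g q), N, k, _, hj.isTotallyReflexive_mid hT hX, hk, hN⟩

theorem exists_fin_free_cover [IsNoetherianRing R] {M : ModuleCat.{u} R}
    (h : GdimLE R (n + 1) M) :
    ∃ (m : ℕ) (L : ModuleCat.{u} R) (f : L →ₗ[R] (Fin m → R)) (g : (Fin m → R) →ₗ[R] M),
      IsShortExact R f g ∧ GdimLE R n L := by
  obtain ⟨X, K, f, g, hX, hs, hK⟩ := h
  have := hX.finite
  obtain ⟨m, p, hp⟩ := Module.Finite.exists_fin' R X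
  have hker : IsTotallyReflexive R (LinearMap.ker p) :=
    (isShortExact_ker_subtype hp).isTotallyReflexive_left .of_projective hX
  obtain ⟨i, hi⟩ := fiberProduct.exists_isShortExact_snd (isShortExact_ker_subtype hp) f
  exact ⟨m, .of R (fiberProduct p f), _, _, fiberProduct.isShortExact_fst_comp hp hs,
    of_isShortExact (T := .of R (LinearMap.ker p)) hi hker hK⟩

theorem pdimLE [IsNoetherianRing R] {M : ModuleCat.{u} R} (h : GdimLE R n M)
    (hM : IsTotallyReflexiveOrthogonal R M) : PdimLE R n M := by
  induction n generalizing M with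
  | zero => exact ⟨IsTotallyReflexive.finite h, hM.projective h⟩
  | succ n ih =>
    obtain ⟨m, L, f, g, hs, hL⟩ := h.exists_fin_free_cover
    have hL' : IsTotallyReflexiveOrthogonal R L :=
      hs.isTotallyReflexiveOrthogonal_left (.fin_free m) hM
    exact ⟨.of R (Fin m → R), L, f, g, inferInstanceAs (Module.Finite R (Fin m → R)),
      inferInstanceAs (Module.Projective R (Fin m → R)), hs, ih hL hL'⟩

end GdimLE

theorem PdimLE.gdimLE {n : ℕ} {M : ModuleCat.{u} R} (h : PdimLE R n M) : GdimLE R n M := by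
  induction n generalizing M with
  | zero =>
    obtain ⟨_, _⟩ := h
    exact .of_projective
  | succ n ih =>
    obtain ⟨X, K, f, g, _, _, hs, hK⟩ := h
    exact ⟨X, K, f, g, .of_projective, hs, ih hK⟩

theorem IsTotallyReflexiveOrthogonal.pdim_eq_gdim [IsNoetherianRing R] {M : ModuleCat.{u} R}
    (hM : IsTotallyReflexiveOrthogonal R M) : Pdim R M = Gdim R M := by
  have pdimLE_iff_gdimLE (n : ℕ) : PdimLE R n M ↔ GdimLE R n M :=
    ⟨PdimLE.gdimLE, fun h => h.pdimLE hM⟩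
  simp only [Pdim, Gdim, pdimLE_iff_gdimLE]

end

theorem stmt0_general (R : Type u) [CommRing R] [IsNoetherianRing R] (M : Type u)
    [AddCommGroup M] [Module R M] (hinj : ∃ n : ℕ, InjdimLE R n (ModuleCat.of R M)) :
    Pdim R (ModuleCat.of R M) = Gdim R (ModuleCat.of R M) ∧
      (Pdim R (ModuleCat.of R M) ≠ ⊤ ↔ Gdim R (ModuleCat.of R M) ≠ ⊤) := by
  obtain ⟨n, hn⟩ := hinj
  have h := hn.isTotallyReflexiveOrthogonal.pdim_eq_gdim
  exact ⟨h, by rw [h]⟩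

theorem stmt0 (R : Type u) [CommRing R] [IsNoetherianRing R] [IsLocalRing R]
    (M : Type u) [AddCommGroup M] [Module R M] [Module.Finite R M] [Nontrivial M]
    (hinj : ∃ n : ℕ, InjdimLE R n (ModuleCat.of R M)) :
    Pdim R (ModuleCat.of R M) = Gdim R (ModuleCat.of R M) ∧
      (Pdim R (ModuleCat.of R M) ≠ ⊤ ↔ Gdim R (ModuleCat.of R M) ≠ ⊤) :=
  stmt0_general R M hinj
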